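/- (Contraction of the rearrangement in ℓ^p.) Let d ≥ 2, p ≥ 1, and let u, v : ℤ^d → [0,∞) with Σ_x u(x)^p < ∞ and Σ_x v(x)^p < ∞. Then Σ_{x∈ℤ^d} |u*(x) − v*(x)|^p ≤ Σ_{x∈ℤ^d} |u(x) − v(x)|^p, where u* = R_{ℤ^d} u and v* = R_{ℤ^d} v. Moreover, if p > 1 and u is Schwarz symmetric with strictly decreasing values a₁(u) > a₂(u) > a₃(u) > ⋯, then equality holds if and only if v = v*. -/

import Mathlib

open Filter Topology

noncomputable section

abbrev ZLat (d : ℕ) := Fin d → ℤ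

def stdVec (d : ℕ) (i : Fin d) : Fin d → ℝ := fun j => if j = i then 1 else 0

/-- The set of directions E⃗ ⊆ ℝ^d. -/
def Evec (d : ℕ) : Set (Fin d → ℝ) :=
  {e | (∃ i, e = stdVec d i) ∨
    (∃ i j : Fin d, i < j ∧ e = fun k => (stdVec d i k + stdVec d j k) / 2) ∨
    (∃ i j : Fin d, i < j ∧ e = fun k => (stdVec d i k - stdVec d j k) / 2)}

/-- A fixed enumeration of E⃗ (for d = 2 it is e₁, e₂, (e₁+e₂)/2, (e₁-e₂)/2). -/
def EvecList (d : ℕ) : List (Fin d → ℝ) :=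
  ((List.finRange d).map (stdVec d)) ++
  ((List.finRange d).flatMap fun i => (List.finRange d).filterMap fun j =>
    if i < j then some (fun k => (stdVec d i k + stdVec d j k) / 2) else none) ++
  ((List.finRange d).flatMap fun i => (List.finRange d).filterMap fun j =>
    if i < j then some (fun k => (stdVec d i k - stdVec d j k) / 2) else none)

/-- The n-th largest value of `u`, counted with multiplicity (1-indexed). -/
def nthLargest {α : Type*} (u : α → NNReal) (n : ℕ) : NNReal :=
  sSup {t | ∃ Ω : Finset α, Ω.card = n ∧ ∀ x ∈ Ω, t ≤ u x}

/-- The 1-indexed position of the point with doubled coordinate `m` in the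
spiral order 0, 1, −1, 2, −2, … (for even m) resp. 1/2, −1/2, 3/2, −3/2, … (for odd m). -/
def posIdx (m : ℤ) : ℕ := (if 0 < m then m else 1 - m).toNat

/-- `x` and `y` lie on a common line with direction `e`. -/
def sameLine {d : ℕ} (e : Fin d → ℝ) (x y : ZLat d) : Prop :=
  ∃ c : ℝ, (fun i => (x i : ℝ) - (y i : ℝ)) = c • e

/-- Twice the inner product ⟨e, x⟩, as an integer. -/
def pairing {d : ℕ} (e : Fin d → ℝ) (x : ZLat d) : ℤ :=
  ⌊2 * ∑ i, e i * (x i : ℝ)⌋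

/-- One-step rearrangement `R_e`. -/
def stepR {d : ℕ} (e : Fin d → ℝ) (u : ZLat d → NNReal) : ZLat d → NNReal :=
  fun x => nthLargest (fun y : {y : ZLat d // sameLine e x y} => u y.1) (posIdx (pairing e x))

/-- `R^k u` : k successive one-step rearrangements cycling through the fixed enumeration. -/
def iterR (d : ℕ) (u : ZLat d → NNReal) : ℕ → ZLat d → NNReal
  | 0 => u
  | k + 1 => stepR ((EvecList d).getD (k % (EvecList d).length) 0) (iterR d u k)

/-- The Schwarz rearrangement on ℤ^d : pointwise limit of `R^k u`. -/
def RZd (d : ℕ) (u : ZLat d → NNReal) : ZLat d → NNReal :=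
  fun x => limUnder atTop fun k => iterR d u k x

def Admissible {α : Type*} (u : α → NNReal) : Prop :=
  ∀ t : NNReal, 0 < t → {x | t < u x}.Finite

def Equimeasurable {α : Type*} (u v : α → NNReal) : Prop :=
  ∀ t : NNReal, 0 < t → Nonempty ({x | t < u x} ≃ {x | t < v x})

/-- Graph distance (ℓ¹ distance) on the lattice ℤ^d. -/
def latDist {d : ℕ} (x y : ZLat d) : ℕ := ∑ i, (x i - y i).natAbs

/-- The i-th standard basis vector of ℤ^d. -/
def latE {d : ℕ} (i : Fin d) : ZLat d := fun j => if j = i then 1 else 0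

/-- ‖∇u‖_p^p : the p-Sobolev energy, summing over each edge {x, x+e_i} once. -/
def gradEnergy (d : ℕ) (p : ℝ) (u : ZLat d → NNReal) : ENNReal :=
  ∑' (x : ZLat d) (i : Fin d), ENNReal.ofReal (|(u (x + latE i) : ℝ) - (u x : ℝ)| ^ p)

/-- ‖∇u‖_p. -/
def gradNorm (d : ℕ) (p : ℝ) (u : ZLat d → NNReal) : ENNReal :=
  gradEnergy d p u ^ (1 / p)

/-- Graph automorphism of the lattice graph ℤ^d. -/
def IsLatAuto {d : ℕ} (σ : ZLat d ≃ ZLat d) : Prop :=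
  ∀ x y : ZLat d, latDist (σ x) (σ y) = 1 ↔ latDist x y = 1

def Supermodular (G : NNReal → NNReal → NNReal) : Prop :=
  ∀ s t s₀ t₀ : NNReal, G (s + s₀) t + G s (t + t₀) ≤ G (s + s₀) (t + t₀) + G s t

def StrictlySupermodular (G : NNReal → NNReal → NNReal) : Prop :=
  ∀ s t s₀ t₀ : NNReal, 0 < s₀ → 0 < t₀ →
    G (s + s₀) t + G s (t + t₀) < G (s + s₀) (t + t₀) + G s t

/-- The values of `u` are strictly decreasing: a₁ > a₂ > a₃ > ⋯ . -/
def StrictRan {α : Type*} (u : α → NNReal) : Prop :=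
  ∀ n : ℕ, 0 < n → nthLargest u (n + 1) < nthLargest u n

/-!
Call a cost `c` Monge if uncrossing a pair of values never raises it:
`c(s, t) + c(s', t') ≤ c(s, t') + c(s', t)` for `s ≤ s'`, `t ≤ t'`. Sorting two functions along a
line undoes all crossings between them, so a one-step rearrangement lowers `∑ c(u, v)`, in
particular for `c(s, t) = |s - t|^p`.

The iterated rearrangements converge because the squared distance to a point slightly off the
origin increases along the spiral order of every line. Scaled to take natural numbers as values and
summed over a superlevel set, it does not increase under a step, and strictly decreases if the set
moves. Hence each superlevel set is eventually constant, and Fatou's lemma carries the contraction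
to the limit.

If `u` is symmetric with strictly decreasing values, its support is infinite and closed under moving
back along the spiral orders, hence is all of `ℤ^d`. So `u` is strictly decreasing along every line,
and a strictly Monge cost drops at the first step that changes `v`.
-/

section NthLargest

variable {α β : Type*} {f : α → NNReal}

theorem le_nthLargest (hf : BddAbove (Set.range f)) {Ω : Finset α} (hΩ : Ω.Nonempty)
    {t : NNReal} (ht : ∀ x ∈ Ω, t ≤ f x) : t ≤ nthLargest f Ω.card := by
  obtain ⟨B, hB⟩ := hf
  refine le_csSup ⟨B, ?_⟩ ⟨Ω, rfl, ht⟩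
  rintro s ⟨Ω', hcard, hs⟩
  obtain ⟨x, hx⟩ : Ω'.Nonempty := Finset.card_pos.1 (hcard ▸ hΩ.card_pos)
  exact (hs x hx).trans (hB ⟨x, rfl⟩)

theorem lt_nthLargest_iff (hf : BddAbove (Set.range f)) {n : ℕ} (hn : 0 < n) {t : NNReal} :
    t < nthLargest f n ↔ ∃ Ω : Finset α, Ω.card = n ∧ ∀ x ∈ Ω, t < f x := by
  constructor
  · intro h
    have hne : {t | ∃ Ω : Finset α, Ω.card = n ∧ ∀ x ∈ Ω, t ≤ f x}.Nonempty :=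
      Set.nonempty_iff_ne_empty.2 fun h0 => by simp [nthLargest, h0] at h
    obtain ⟨s, ⟨Ω, hcard, hs⟩, hts⟩ := exists_lt_of_lt_csSup hne h
    exact ⟨Ω, hcard, fun x hx => hts.trans_le (hs x hx)⟩
  · rintro ⟨Ω, rfl, ht⟩
    have hΩ : Ω.Nonempty := Finset.card_pos.1 hn
    obtain ⟨x, hx, hmin⟩ := Ω.exists_min_image f hΩ
    exact (ht x hx).trans_le (le_nthLargest hf hΩ hmin)

theorem nthLargest_le_of_forall_le {B : NNReal} (hB : ∀ x, f x ≤ B) {n : ℕ} (hn : 0 < n) :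
    nthLargest f n ≤ B := by
  refine csSup_le' ?_
  rintro t ⟨Ω, hcard, ht⟩
  obtain ⟨x, hx⟩ : Ω.Nonempty := Finset.card_pos.1 (hcard ▸ hn)
  exact (ht x hx).trans (hB x)

theorem nthLargest_comp_equiv (σ : α ≃ β) (g : β → NNReal) (n : ℕ) :
    nthLargest (fun a => g (σ a)) n = nthLargest g n := by
  unfold nthLargest
  congr 1
  ext t
  constructor
  · rintro ⟨Ω, hcard, ht⟩
    exact ⟨Ω.map σ.toEmbedding, by rwa [Finset.card_map], Finset.forall_mem_map.2 ht⟩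
  · rintro ⟨Ω, hcard, ht⟩
    refine ⟨Ω.map σ.symm.toEmbedding, by rwa [Finset.card_map], Finset.forall_mem_map.2 ?_⟩
    simpa only [Equiv.coe_toEmbedding, Equiv.apply_symm_apply] using ht

theorem nthLargest_anti (hf : BddAbove (Set.range f)) {m n : ℕ} (hm : 0 < m) (hmn : m ≤ n) :
    nthLargest f n ≤ nthLargest f m := by
  refine le_of_forall_lt fun t ht => ?_
  rw [lt_nthLargest_iff hf (hm.trans_le hmn)] at ht
  obtain ⟨Ω, rfl, ht⟩ := ht
  obtain ⟨Ω', hsub, hcard⟩ := Finset.exists_subset_card_eq hmn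
  exact (lt_nthLargest_iff hf hm).2 ⟨Ω', hcard, fun x hx => ht x (hsub hx)⟩

theorem nthLargest_one_of_forall_le {x : α} (hx : ∀ y, f y ≤ f x) : nthLargest f 1 = f x :=
  (nthLargest_le_of_forall_le hx one_pos).antisymm <|
    le_nthLargest (Ω := {x}) ⟨f x, by simpa [mem_upperBounds] using hx⟩
      (Finset.singleton_nonempty x) (by simp)

theorem nthLargest_compl_singleton {x : α} (hx : ∀ y, f y ≤ f x) {n : ℕ} (hn : 0 < n) :
    nthLargest (fun z : ({x}ᶜ : Set α) => f z) n = nthLargest f (n + 1) := by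
  classical
  have hf : BddAbove (Set.range f) := ⟨f x, by simpa [mem_upperBounds] using hx⟩
  have hf' : BddAbove (Set.range fun z : ({x}ᶜ : Set α) => f z) :=
    ⟨f x, by rintro _ ⟨z, rfl⟩; exact hx z⟩
  refine eq_of_forall_lt_iff fun t => ?_
  rw [lt_nthLargest_iff hf' hn, lt_nthLargest_iff hf n.succ_pos]
  constructor
  · rintro ⟨Ω, rfl, ht⟩
    obtain ⟨z, hz⟩ := Finset.card_pos.1 hn
    have hxΩ : x ∉ Ω.map (Function.Embedding.subtype _) := by simp
    refine ⟨insert x (Ω.map (Function.Embedding.subtype _)), ?_, ?_⟩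
    · rw [Finset.card_insert_of_notMem hxΩ, Finset.card_map]
    · simp only [Finset.forall_mem_insert, Finset.forall_mem_map]
      exact ⟨(ht z hz).trans_le (hx z), ht⟩
  · rintro ⟨Ω, hcard, ht⟩
    have hn' : n ≤ (Ω.erase x).card := by
      have := Finset.pred_card_le_card_erase (s := Ω) (a := x)
      lia
    obtain ⟨Ω', hsub, hcard'⟩ := Finset.exists_subset_card_eq hn'
    refine ⟨Ω'.subtype (· ∈ ({x}ᶜ : Set α)), ?_, fun a ha => ?_⟩
    · rw [Finset.card_subtype, Finset.filter_true_of_mem, hcard']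
      exact fun a ha => Finset.ne_of_mem_erase (hsub ha)
    · exact ht _ (Finset.mem_of_mem_erase (hsub (Finset.mem_subtype.1 ha)))

theorem lt_nthLargest_succ_iff {g : ℕ → NNReal} (hg : BddAbove (Set.range g)) {t : NNReal}
    (ht : IsLowerSet {n | t < g n}) (n : ℕ) : t < nthLargest g (n + 1) ↔ t < g n := by
  rw [lt_nthLargest_iff hg n.succ_pos]
  constructor
  · rintro ⟨Ω, hcard, hΩ⟩
    by_contra hn
    have hsub : Ω ⊆ Finset.range n := fun m hm =>
      Finset.mem_range.2 (not_le.1 fun hnm => hn (ht hnm (hΩ m hm)))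
    have := Finset.card_le_card hsub
    rw [hcard, Finset.card_range] at this
    lia
  · exact fun hn => ⟨Finset.range (n + 1), Finset.card_range _, fun m hm =>
      ht (Finset.mem_range_succ_iff.1 hm) hn⟩

theorem nthLargest_succ_of_antitone {g : ℕ → NNReal} (hg : Antitone g) (n : ℕ) :
    nthLargest g (n + 1) = g n := by
  have hbdd : BddAbove (Set.range g) := ⟨g 0, by rintro _ ⟨m, rfl⟩; exact hg m.zero_le⟩
  exact eq_of_forall_lt_iff fun t =>
    lt_nthLargest_succ_iff hbdd (fun _ _ hmn hm => lt_of_lt_of_le hm (hg hmn)) n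

end NthLargest

section Admissible

variable {α β : Type*} {f : α → NNReal}

theorem Admissible.comp_injective (hf : Admissible f) {σ : β → α} (hσ : Function.Injective σ) :
    Admissible fun b => f (σ b) := fun t ht =>
  (hf t ht).preimage (f := σ) hσ.injOn

theorem Admissible.exists_forall_le [Nonempty α] (hf : Admissible f) : ∃ x, ∀ y, f y ≤ f x := by
  by_cases h0 : ∀ y, f y = 0
  · exact ⟨Classical.arbitrary α, fun y => by simp [h0]⟩
  push Not at h0
  obtain ⟨y, hy⟩ := h0
  have hy : 0 < f y := pos_iff_ne_zero.2 hy
  obtain ⟨x, hx, hmax⟩ :=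
    Set.exists_max_image _ f (hf (f y / 2) (half_pos hy))
      ⟨y, show f y / 2 < f y from half_lt_self hy⟩
  refine ⟨x, fun z => ?_⟩
  by_cases hz : f y / 2 < f z
  · exact hmax z hz
  · exact (not_lt.1 hz).trans (le_of_lt hx)

theorem Admissible.bddAbove (hf : Admissible f) : BddAbove (Set.range f) := by
  cases isEmpty_or_nonempty α
  · simp [Set.range_eq_empty]
  · obtain ⟨x, hx⟩ := hf.exists_forall_le
    exact ⟨f x, by simpa [mem_upperBounds] using hx⟩

theorem admissible_of_tsum_rpow_lt_top {p : ℝ} (hp : 0 < p)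
    (hf : ∑' x, (f x : ENNReal) ^ p < ⊤) : Admissible f := by
  intro t ht
  have htp : (t : ENNReal) ^ p ≠ 0 := (ENNReal.rpow_pos (mod_cast ht) ENNReal.coe_ne_top).ne'
  refine (ENNReal.finite_const_le_of_tsum_ne_top hf.ne htp).subset fun x hx => ?_
  exact ENNReal.rpow_le_rpow (mod_cast (le_of_lt hx)) hp.le

theorem StrictRan.infinite_support (hf : Admissible f) (hran : StrictRan f) :
    {x | 0 < f x}.Infinite := by
  intro hfin
  have hpos : 0 < nthLargest f (hfin.toFinset.card + 1) :=
    bot_le.trans_lt (hran _ (Nat.succ_pos _))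
  obtain ⟨Ω, hcard, hΩ⟩ := (lt_nthLargest_iff hf.bddAbove (Nat.succ_pos _)).1 hpos
  have hsub : Ω ⊆ hfin.toFinset := fun x hx => by simpa using hΩ x hx
  have := Finset.card_le_card hsub
  lia

theorem StrictRan.eq_of_apply_eq (hf : Admissible f) (hran : StrictRan f) {x y : α}
    (hx : 0 < f x) (hxy : f x = f y) : x = y := by
  classical
  by_contra hne
  have hfin := hf (f x) hx
  set A := hfin.toFinset
  have hA : ∀ z, z ∈ A ↔ f x < f z := fun z => by simp [A]
  have hle : nthLargest f (A.card + 1) ≤ f x := by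
    by_contra! hlt
    obtain ⟨Ω, hcard, hΩ⟩ := (lt_nthLargest_iff hf.bddAbove (Nat.succ_pos _)).1 hlt
    have := Finset.card_le_card fun z hz => (hA z).2 (hΩ z hz)
    lia
  have hcard : (insert x (insert y A)).card = A.card + 2 := by
    rw [Finset.card_insert_of_notMem, Finset.card_insert_of_notMem] <;>
      simp [hA, hne, hxy]
  have hge : f x ≤ nthLargest f (A.card + 2) := by
    rw [← hcard]
    refine le_nthLargest hf.bddAbove (Finset.insert_nonempty _ _) ?_
    simp only [Finset.forall_mem_insert]
    exact ⟨le_rfl, hxy.le, fun z hz => ((hA z).1 hz).le⟩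
  exact ((hran _ (Nat.succ_pos _)).trans_le hle).not_ge hge

end Admissible

section Monge

/-- The Monge condition on a two-variable cost: pairing two values in the same order costs no more
than pairing them crosswise. It is the hypothesis under which rearranging both arguments of
`∑ x, c (f x) (g x)` decreases the sum. -/
def Monge (c : NNReal → NNReal → ENNReal) : Prop :=
  ∀ ⦃a' a⦄, a' ≤ a → ∀ ⦃b' b⦄, b' ≤ b → c a b + c a' b' ≤ c a b' + c a' b

/-- The strict form of `Monge`: a genuine crossing costs strictly more. It governs the equality
case of the rearrangement inequality. -/
def StrictMonge (c : NNReal → NNReal → ENNReal) : Prop :=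
  ∀ ⦃a' a⦄, a' < a → ∀ ⦃b' b⦄, b' < b → c a b + c a' b' < c a b' + c a' b

variable {c : NNReal → NNReal → ENNReal}

theorem StrictMonge.monge (hc : StrictMonge c) : Monge c := by
  intro a' a ha b' b hb
  rcases ha.eq_or_lt with rfl | ha
  · rw [add_comm]
  rcases hb.eq_or_lt with rfl | hb
  · rfl
  exact (hc ha hb).le

end Monge

section Swap

variable {α : Type*} [DecidableEq α] (c : NNReal → NNReal → ENNReal) (f g : α → NNReal) {x y : α}

theorem tsum_eq_add_add_tsum_compl_pair (h : α → ENNReal) (hxy : x ≠ y) :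
    ∑' z, h z = h x + h y + ∑' z : ((({x, y} : Finset α) : Set α)ᶜ : Set α), h z := by
  rw [← Finset.sum_pair hxy]
  exact (ENNReal.sum_add_tsum_compl {x, y} h).symm

theorem tsum_comp_swap (hxy : x ≠ y) :
    ∑' z, c (f z) (g (Equiv.swap x y z)) = c (f x) (g y) + c (f y) (g x) +
      ∑' z : ((({x, y} : Finset α) : Set α)ᶜ : Set α), c (f z) (g z) := by
  rw [tsum_eq_add_add_tsum_compl_pair _ hxy, Equiv.swap_apply_left, Equiv.swap_apply_right]
  congr 1
  refine tsum_congr fun z => ?_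
  have hz : (z : α) ≠ x ∧ (z : α) ≠ y := by simpa [not_or] using z.2
  rw [Equiv.swap_apply_of_ne_of_ne hz.1 hz.2]

variable {c f g}

theorem tsum_comp_swap_le
    (h : c (f x) (g y) + c (f y) (g x) ≤ c (f x) (g x) + c (f y) (g y)) :
    ∑' z, c (f z) (g (Equiv.swap x y z)) ≤ ∑' z, c (f z) (g z) := by
  rcases eq_or_ne x y with rfl | hxy
  · simp
  rw [tsum_comp_swap c f g hxy, tsum_eq_add_add_tsum_compl_pair (fun z => c (f z) (g z)) hxy]
  gcongr

theorem tsum_comp_swap_lt (hfin : ∑' z, c (f z) (g z) ≠ ⊤) (hxy : x ≠ y)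
    (h : c (f x) (g y) + c (f y) (g x) < c (f x) (g x) + c (f y) (g y)) :
    ∑' z, c (f z) (g (Equiv.swap x y z)) < ∑' z, c (f z) (g z) := by
  rw [tsum_eq_add_add_tsum_compl_pair (fun z => c (f z) (g z)) hxy] at hfin ⊢
  rw [tsum_comp_swap c f g hxy]
  exact ENNReal.add_lt_add_right (ENNReal.add_ne_top.1 hfin).2 h

end Swap

section OneDimensional

variable {c : NNReal → NNReal → ENNReal}

-- The induction passes from `α` to the complement of a maximizer of `f`, after a transposition has
-- aligned that maximizer with a maximizer of `g`.
theorem sum_range_nthLargest_le_tsum (hc : Monge c) (N : ℕ) {α : Type*} [Infinite α]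
    {f g : α → NNReal} (hf : Admissible f) (hg : Admissible g) :
    ∑ k ∈ Finset.range N, c (nthLargest f (k + 1)) (nthLargest g (k + 1)) ≤
      ∑' x, c (f x) (g x) := by
  classical
  induction N generalizing α with
  | zero => simp
  | succ N ih =>
    obtain ⟨x, hx⟩ := hf.exists_forall_le
    obtain ⟨y, hy⟩ := hg.exists_forall_le
    set g' : α → NNReal := fun z => g (Equiv.swap x y z) with hg'_def
    have hg'x : ∀ z, g' z ≤ g' x := fun z => by
      simpa only [hg'_def, Equiv.swap_apply_left] using hy _
    have hg' : Admissible g' := hg.comp_injective (Equiv.swap x y).injective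
    have hinf : Infinite ({x}ᶜ : Set α) := (Set.finite_singleton x).infinite_compl.to_subtype
    calc ∑ k ∈ Finset.range (N + 1), c (nthLargest f (k + 1)) (nthLargest g (k + 1))
        = ∑ k ∈ Finset.range (N + 1), c (nthLargest f (k + 1)) (nthLargest g' (k + 1)) := by
          simp only [hg'_def, nthLargest_comp_equiv]
      _ = ∑ k ∈ Finset.range N, c (nthLargest (fun z : ({x}ᶜ : Set α) => f z) (k + 1))
            (nthLargest (fun z : ({x}ᶜ : Set α) => g' z) (k + 1)) + c (f x) (g' x) := by
          rw [Finset.sum_range_succ', nthLargest_one_of_forall_le hx,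
            nthLargest_one_of_forall_le hg'x]
          simp only [nthLargest_compl_singleton hx, nthLargest_compl_singleton hg'x,
            Nat.succ_pos]
      _ ≤ ∑' z : ({x}ᶜ : Set α), c (f z) (g' z) + c (f x) (g' x) := by
          gcongr
          exact ih (hf.comp_injective Subtype.val_injective)
            (hg'.comp_injective Subtype.val_injective)
      _ = ∑' z, c (f z) (g' z) := by
          rw [add_comm, ← ENNReal.sum_add_tsum_compl {x}, Finset.sum_singleton,
            Finset.coe_singleton]
      _ ≤ ∑' z, c (f z) (g z) := tsum_comp_swap_le (hc (hx y) (hy x))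

theorem tsum_nthLargest_le_tsum (hc : Monge c) {α : Type*} [Infinite α] {f g : α → NNReal}
    (hf : Admissible f) (hg : Admissible g) :
    ∑' k, c (nthLargest f (k + 1)) (nthLargest g (k + 1)) ≤ ∑' x, c (f x) (g x) := by
  rw [ENNReal.tsum_eq_iSup_nat]
  exact iSup_le fun N => sum_range_nthLargest_le_tsum hc N hf hg

theorem tsum_nthLargest_lt_tsum (hc : Monge c) {f g : ℕ → NNReal} (hf : Admissible f)
    (hg : Admissible g) (hfin : ∑' k, c (f k) (g k) ≠ ⊤) {m n : ℕ}
    (h : c (f m) (g n) + c (f n) (g m) < c (f m) (g m) + c (f n) (g n)) :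
    ∑' k, c (nthLargest f (k + 1)) (nthLargest g (k + 1)) < ∑' k, c (f k) (g k) := by
  have hmn : m ≠ n := by
    rintro rfl
    exact lt_irrefl _ h
  have hswap := tsum_nthLargest_le_tsum hc hf (hg.comp_injective (Equiv.swap m n).injective)
  simp only [nthLargest_comp_equiv] at hswap
  exact hswap.trans_lt (tsum_comp_swap_lt hfin hmn h)

end OneDimensional

section FiberRearrange

variable {X Q : Type*} (φ : X ≃ Q × ℕ) (u : X → NNReal)

/-- The rearrangement of `u` along the fibres of a decomposition `φ` of `X` into sequences: on each
sequence, the values of `u` are put in decreasing order. The one-step rearrangements of `ℤ^d` are of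
this form, with one sequence for each line. -/
def fiberRearrange (x : X) : NNReal :=
  nthLargest (fun n => u (φ.symm ((φ x).1, n))) ((φ x).2 + 1)

/-- `x` strictly precedes `y` on one of the sequences of the decomposition `φ`. -/
def FiberLT (x y : X) : Prop :=
  (φ x).1 = (φ y).1 ∧ (φ x).2 < (φ y).2

/-- `u` is nonincreasing along every sequence of the decomposition `φ`. -/
def FiberAntitone : Prop :=
  ∀ ⦃x y⦄, FiberLT φ x y → u y ≤ u x

/-- `u` is strictly decreasing along every sequence of the decomposition `φ`. -/
def FiberStrictAnti : Prop :=
  ∀ ⦃x y⦄, FiberLT φ x y → u y < u x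

variable {φ u}

theorem fiberRearrange_symm_apply (q : Q) (n : ℕ) :
    fiberRearrange φ u (φ.symm (q, n)) = nthLargest (fun m => u (φ.symm (q, m))) (n + 1) := by
  simp only [fiberRearrange, Equiv.apply_symm_apply]

theorem fiberRearrange_apply_eq {r : X → Prop} {x : X} (hr : ∀ y, r y ↔ (φ y).1 = (φ x).1) :
    fiberRearrange φ u x = nthLargest (fun y : {y // r y} => u y) ((φ x).2 + 1) := by
  let σ : ℕ ≃ {y // r y} :=
    { toFun := fun n => ⟨φ.symm ((φ x).1, n), (hr _).2 (by rw [Equiv.apply_symm_apply])⟩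
      invFun := fun y => (φ y).2
      left_inv := fun n => by simp only [Equiv.apply_symm_apply]
      right_inv := fun y => Subtype.ext <| show φ.symm ((φ x).1, (φ y).2) = y by
        rw [← (hr y).1 y.2, Prod.mk.eta, φ.symm_apply_apply] }
  exact nthLargest_comp_equiv σ (fun y => u y) _

theorem tsum_eq_tsum_fiber (φ : X ≃ Q × ℕ) (h : X → ENNReal) :
    ∑' x, h x = ∑' q, ∑' n, h (φ.symm (q, n)) := by
  rw [← φ.symm.tsum_eq h, ENNReal.tsum_prod']

theorem Admissible.comp_fiber (hu : Admissible u) (φ : X ≃ Q × ℕ) (q : Q) :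
    Admissible fun n => u (φ.symm (q, n)) :=
  hu.comp_injective fun _ _ h => (Prod.mk.inj (φ.symm.injective h)).2

theorem fiberLT_symm_apply {q : Q} {m n : ℕ} (hmn : m < n) :
    FiberLT φ (φ.symm (q, m)) (φ.symm (q, n)) := by
  simpa only [FiberLT, Equiv.apply_symm_apply, true_and]

theorem FiberStrictAnti.fiberAntitone (hu : FiberStrictAnti φ u) : FiberAntitone φ u :=
  fun _ _ h => (hu h).le

theorem FiberAntitone.antitone (hu : FiberAntitone φ u) (q : Q) :
    Antitone fun n => u (φ.symm (q, n)) := fun _ _ hmn =>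
  hmn.eq_or_lt.elim (fun h => h ▸ le_rfl) fun h => hu (fiberLT_symm_apply h)

theorem FiberAntitone.fiberRearrange_eq (hu : FiberAntitone φ u) : fiberRearrange φ u = u :=
  funext fun x => by
    rw [fiberRearrange, nthLargest_succ_of_antitone (hu.antitone _), Prod.mk.eta,
      φ.symm_apply_apply]

theorem fiberAntitone_fiberRearrange (hu : Admissible u) :
    FiberAntitone φ (fiberRearrange φ u) := by
  rintro x y ⟨hq, hn⟩
  unfold fiberRearrange
  rw [hq]
  exact nthLargest_anti (hu.comp_fiber φ _).bddAbove (Nat.succ_pos _) (Nat.succ_le_succ hn.le)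

theorem fiberRearrange_le {B : NNReal} (hB : ∀ x, u x ≤ B) (x : X) : fiberRearrange φ u x ≤ B :=
  nthLargest_le_of_forall_le (fun _ => hB _) (Nat.succ_pos _)

theorem Admissible.fiberRearrange (hu : Admissible u) (φ : X ≃ Q × ℕ) :
    Admissible (fiberRearrange φ u) := by
  classical
  intro t ht
  set A := (hu t ht).toFinset
  refine (((A.image fun x => (φ x).1) ×ˢ Finset.range A.card).finite_toSet.preimage
    φ.injective.injOn).subset fun x hx => ?_
  obtain ⟨Ω, hcard, hΩ⟩ :=
    (lt_nthLargest_iff (hu.comp_fiber φ _).bddAbove (Nat.succ_pos _)).1 hx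
  have hmem : ∀ n ∈ Ω, φ.symm ((φ x).1, n) ∈ A := fun n hn =>
    (hu t ht).mem_toFinset.2 (hΩ n hn)
  have hle : Ω.card ≤ A.card := Finset.card_le_card_of_injOn _ hmem fun m _ n _ h =>
    (Prod.mk.inj (φ.symm.injective h)).2
  obtain ⟨n, hn⟩ : Ω.Nonempty := Finset.card_pos.1 (hcard ▸ Nat.succ_pos _)
  simp only [Set.mem_preimage, Finset.coe_product, Set.mem_prod, Finset.mem_coe,
    Finset.mem_image, Finset.mem_range]
  exact ⟨⟨_, hmem n hn, by rw [Equiv.apply_symm_apply]⟩, by lia⟩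

theorem lt_fiberRearrange_iff (hu : Admissible u) {t : NNReal}
    (ht : ∀ ⦃x y⦄, FiberLT φ x y → t < u y → t < u x) (x : X) :
    t < fiberRearrange φ u x ↔ t < u x := by
  have hlower : IsLowerSet {n | t < u (φ.symm ((φ x).1, n))} := fun n m hmn hn =>
    hmn.eq_or_lt.elim (fun h => h ▸ hn) fun h => ht (fiberLT_symm_apply h) hn
  rw [fiberRearrange, lt_nthLargest_succ_iff (hu.comp_fiber φ _).bddAbove hlower, Prod.mk.eta,
    φ.symm_apply_apply]

variable {c : NNReal → NNReal → ENNReal} {v : X → NNReal}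

theorem tsum_fiberRearrange_le (hc : Monge c) (hu : Admissible u) (hv : Admissible v) :
    ∑' x, c (fiberRearrange φ u x) (fiberRearrange φ v x) ≤ ∑' x, c (u x) (v x) := by
  rw [tsum_eq_tsum_fiber φ, tsum_eq_tsum_fiber φ fun x => c (u x) (v x)]
  refine ENNReal.tsum_le_tsum fun q => ?_
  simp only [fiberRearrange_symm_apply]
  exact tsum_nthLargest_le_tsum hc (hu.comp_fiber φ q) (hv.comp_fiber φ q)

theorem tsum_fiberRearrange_lt (hc : Monge c) (hu : Admissible u) (hv : Admissible v)
    (hfin : ∑' x, c (u x) (v x) ≠ ⊤) {x y : X} (hxy : (φ x).1 = (φ y).1)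
    (h : c (u x) (v y) + c (u y) (v x) < c (u x) (v x) + c (u y) (v y)) :
    ∑' x, c (fiberRearrange φ u x) (fiberRearrange φ v x) < ∑' x, c (u x) (v x) := by
  have hle := tsum_fiberRearrange_le (φ := φ) hc hu hv
  have hx : φ.symm ((φ x).1, (φ x).2) = x := φ.symm_apply_apply x
  have hy : φ.symm ((φ x).1, (φ y).2) = y := by rw [hxy]; exact φ.symm_apply_apply y
  rw [← hx, ← hy] at h
  rw [tsum_eq_tsum_fiber φ fun x => c (u x) (v x)] at hfin hle ⊢
  rw [tsum_eq_tsum_fiber φ] at hle ⊢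
  simp only [fiberRearrange_symm_apply] at hle ⊢
  exact ENNReal.tsum_lt_tsum (ne_top_of_le_ne_top hfin hle)
    (fun q => tsum_nthLargest_le_tsum hc (hu.comp_fiber φ q) (hv.comp_fiber φ q))
    (tsum_nthLargest_lt_tsum hc (hu.comp_fiber φ _) (hv.comp_fiber φ _)
      (ENNReal.ne_top_of_tsum_ne_top hfin _) h)

end FiberRearrange

section Potential

variable {X Q : Type*} {φ : X ≃ Q × ℕ} {Φ : X → ℕ} {u : X → NNReal}

/-- `Φ` is a potential for the decomposition `φ`: it is proper and increases strictly along every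
sequence of `φ`. A potential common to several decompositions makes the rearrangements along them
converge when they are iterated. -/
structure IsPotential (φ : X ≃ Q × ℕ) (Φ : X → ℕ) : Prop where
  tendsto : Tendsto Φ cofinite atTop
  lt ⦃x y : X⦄ : FiberLT φ x y → Φ x < Φ y

/-- The admissible function `1 / (Φ + 1)`, which every rearrangement with potential `Φ` fixes. -/
def weight (Φ : X → ℕ) (x : X) : NNReal := (Φ x + 1 : NNReal)⁻¹

/-- The Monge cost which turns the pairing of `weight Φ` with `u` into the sum of `Φ + 1` over the
superlevel set `{u > t}`. -/
def levelCost (t a b : NNReal) : ENNReal := if t < b then (a : ENNReal)⁻¹ else 0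

/-- The sum of `Φ + 1` over the superlevel set `{u > t}`. -/
def superlevelPotential (Φ : X → ℕ) (t : NNReal) (u : X → NNReal) : ENNReal :=
  ∑' x, levelCost t (weight Φ x) (u x)

theorem monge_levelCost (t : NNReal) : Monge (levelCost t) := by
  intro a' a ha b' b hb
  have hinv : (a : ENNReal)⁻¹ ≤ (a' : ENNReal)⁻¹ := ENNReal.inv_le_inv.2 (mod_cast ha)
  unfold levelCost
  split_ifs with hb₁ hb₂ hb₂
  · rfl
  · simpa only [add_zero, zero_add] using hinv
  · exact absurd (hb₂.trans_le hb) hb₁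
  · rfl

theorem levelCost_weight (t b : NNReal) (x : X) :
    levelCost t (weight Φ x) b = if t < b then (Φ x + 1 : ENNReal) else 0 := by
  simp [levelCost, weight]

theorem superlevelPotential_eq_natCast {t : NNReal} (h : {x | t < u x}.Finite) :
    superlevelPotential Φ t u = (∑ x ∈ h.toFinset, (Φ x + 1) : ℕ) := by
  simp only [superlevelPotential, levelCost_weight]
  have hzero : ∀ x ∉ h.toFinset, (if t < u x then (Φ x + 1 : ENNReal) else 0) = 0 := fun x hx =>
    if_neg fun hx' => hx (h.mem_toFinset.2 hx')
  rw [tsum_eq_sum hzero]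
  push_cast
  exact Finset.sum_congr rfl fun x hx => if_pos (h.mem_toFinset.1 hx)

theorem superlevelPotential_ne_top {t : NNReal} (h : {x | t < u x}.Finite) :
    superlevelPotential Φ t u ≠ ⊤ := by
  rw [superlevelPotential_eq_natCast h]
  exact ENNReal.natCast_ne_top _

theorem weight_lt_weight {x y : X} (h : Φ x < Φ y) : weight Φ y < weight Φ x :=
  inv_strictAnti₀ (by positivity) (mod_cast Nat.succ_lt_succ h)

theorem admissible_weight (hΦ : Tendsto Φ cofinite atTop) : Admissible (weight Φ) := by
  intro t ht
  obtain ⟨n, hn⟩ := exists_nat_gt t⁻¹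
  refine (Filter.eventually_cofinite.1 (hΦ.eventually_ge_atTop n)).subset fun x hx hnx => ?_
  have hx' : (Φ x + 1 : NNReal) < t⁻¹ := (lt_inv_comm₀ ht (by positivity)).1 hx
  have : Φ x + 1 < n := mod_cast hx'.trans hn
  lia

theorem IsPotential.fiberRearrange_weight (hΦ : IsPotential φ Φ) :
    fiberRearrange φ (weight Φ) = weight Φ :=
  FiberAntitone.fiberRearrange_eq fun _ _ h => (weight_lt_weight (hΦ.lt h)).le

theorem IsPotential.superlevelPotential_fiberRearrange_le (hΦ : IsPotential φ Φ)
    (hu : Admissible u) (t : NNReal) :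
    superlevelPotential Φ t (fiberRearrange φ u) ≤ superlevelPotential Φ t u := by
  have h := tsum_fiberRearrange_le (φ := φ) (monge_levelCost t) (admissible_weight hΦ.tendsto) hu
  rwa [hΦ.fiberRearrange_weight] at h

theorem IsPotential.lt_fiberRearrange_iff (hΦ : IsPotential φ Φ) (hu : Admissible u) {t : NNReal}
    (ht : 0 < t)
    (heq : superlevelPotential Φ t (fiberRearrange φ u) = superlevelPotential Φ t u) (x : X) :
    t < fiberRearrange φ u x ↔ t < u x := by
  refine _root_.lt_fiberRearrange_iff hu (fun x y hxy hy => ?_) x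
  by_contra hx
  have hcross : levelCost t (weight Φ x) (u y) + levelCost t (weight Φ y) (u x) <
      levelCost t (weight Φ x) (u x) + levelCost t (weight Φ y) (u y) := by
    simp only [levelCost_weight, if_pos hy, if_neg hx, add_zero, zero_add]
    exact_mod_cast Nat.succ_lt_succ (hΦ.lt hxy)
  have hlt := tsum_fiberRearrange_lt (monge_levelCost t) (admissible_weight hΦ.tendsto) hu
    (superlevelPotential_ne_top (hu t ht)) hxy.1 hcross
  rw [hΦ.fiberRearrange_weight] at hlt
  exact hlt.ne heq

end Potential

section Iterate

variable {X ι : Type*} {Q : ι → Type*} (φ : ∀ i, X ≃ Q i × ℕ) (s : ℕ → ι) (u : X → NNReal)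

/-- The successive rearrangements of `u` along the decompositions `φ (s 0)`, `φ (s 1)`, …. -/
def iterFiberRearrange : ℕ → X → NNReal
  | 0 => u
  | k + 1 => fiberRearrange (φ (s k)) (iterFiberRearrange k)

/-- The pointwise limit of the successive rearrangements `iterFiberRearrange φ s u`. The limit is
a junk value unless it exists; see `tendsto_iterFiberRearrange`. -/
def limFiberRearrange (x : X) : NNReal :=
  limUnder atTop fun k => iterFiberRearrange φ s u k x

variable {φ s u} {v : X → NNReal} {Φ : X → ℕ}

theorem Admissible.iterFiberRearrange (hu : Admissible u) (k : ℕ) :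
    Admissible (iterFiberRearrange φ s u k) := by
  induction k with
  | zero => exact hu
  | succ k ih => exact ih.fiberRearrange _

theorem iterFiberRearrange_le {B : NNReal} (hB : ∀ x, u x ≤ B) (k : ℕ) (x : X) :
    iterFiberRearrange φ s u k x ≤ B := by
  induction k generalizing x with
  | zero => exact hB x
  | succ k ih => exact fiberRearrange_le ih x

theorem antitone_superlevelPotential_iterFiberRearrange (hΦ : ∀ i, IsPotential (φ i) Φ)
    (hu : Admissible u) (t : NNReal) :
    Antitone fun k => superlevelPotential Φ t (iterFiberRearrange φ s u k) :=
  antitone_nat_of_succ_le fun k =>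
    (hΦ (s k)).superlevelPotential_fiberRearrange_le (hu.iterFiberRearrange k) t

-- The potential of the superlevel set is a nonincreasing sequence of natural numbers.
theorem exists_lt_iterFiberRearrange_iff (hΦ : ∀ i, IsPotential (φ i) Φ) (hu : Admissible u)
    {t : NNReal} (ht : 0 < t) : ∃ K, ∀ k ≥ K, ∀ x,
      (t < iterFiberRearrange φ s u k x ↔ t < iterFiberRearrange φ s u K x) := by
  have hanti := antitone_superlevelPotential_iterFiberRearrange (s := s) hΦ hu t
  set P : ℕ → ℕ := fun k => ∑ x ∈ ((hu.iterFiberRearrange k) t ht).toFinset, (Φ x + 1)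
  have hP : ∀ k, superlevelPotential Φ t (iterFiberRearrange φ s u k) = P k := fun k =>
    superlevelPotential_eq_natCast _
  obtain ⟨K, hK⟩ : ∃ K, ∀ k, P K ≤ P k := ⟨Function.argmin P, fun k => Function.argmin_le P k⟩
  have hconst : ∀ k ≥ K, superlevelPotential Φ t (iterFiberRearrange φ s u k) =
      superlevelPotential Φ t (iterFiberRearrange φ s u K) := fun k hk =>
    (hanti hk).antisymm (by simpa only [hP, Nat.cast_le] using hK k)
  refine ⟨K, fun k hk => ?_⟩
  induction k, hk using Nat.le_induction with
  | base => exact fun x => Iff.rfl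
  | succ k hk ih =>
    refine fun x => Iff.trans ?_ (ih x)
    refine (hΦ (s k)).lt_fiberRearrange_iff (hu.iterFiberRearrange k) ht ?_ x
    exact (hconst (k + 1) (by lia)).trans (hconst k hk).symm

theorem tendsto_iterFiberRearrange (hΦ : ∀ i, IsPotential (φ i) Φ) (hu : Admissible u) (x : X) :
    Tendsto (fun k => iterFiberRearrange φ s u k x) atTop (𝓝 (limFiberRearrange φ s u x)) := by
  obtain ⟨B, hB⟩ := hu.bddAbove
  refine tendsto_nhds_limUnder <| tendsto_of_no_upcrossings dense_univ ?_
    (isBoundedUnder_of ⟨B, fun k => iterFiberRearrange_le (fun y => hB ⟨y, rfl⟩) k x⟩)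
    (isBoundedUnder_of ⟨0, fun _ => bot_le⟩)
  rintro a - b - hab ⟨ha, hb⟩
  obtain ⟨K, hK⟩ := exists_lt_iterFiberRearrange_iff (s := s) hΦ hu (bot_le.trans_lt hab)
  obtain ⟨m, hm, hma⟩ := Filter.frequently_atTop.1 ha K
  obtain ⟨n, hn, hnb⟩ := Filter.frequently_atTop.1 hb K
  have hmb : b < iterFiberRearrange φ s u m x := (hK m hm x).2 ((hK n hn x).1 hnb)
  exact (hmb.trans (hma.trans hab)).false

theorem fiberAntitone_limFiberRearrange (hΦ : ∀ i, IsPotential (φ i) Φ) (hu : Admissible u)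
    {i : ι} (hi : ∃ᶠ k in atTop, s k = i) : FiberAntitone (φ i) (limFiberRearrange φ s u) := by
  intro x y hxy
  have htendsto : ∀ z, Tendsto (fun k => iterFiberRearrange φ s u (k + 1) z) atTop
      (𝓝 (limFiberRearrange φ s u z)) := fun z =>
    (tendsto_iterFiberRearrange hΦ hu z).comp (tendsto_add_atTop_nat 1)
  by_contra! hlt
  obtain ⟨k, rfl, hk⟩ :=
    (hi.and_eventually ((htendsto x).eventually_lt (htendsto y) hlt)).exists
  exact hk.not_ge (fiberAntitone_fiberRearrange (hu.iterFiberRearrange k) hxy)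

theorem tsum_le_of_tendsto {F : ℕ → X → ENNReal} {f : X → ENNReal} {C : ENNReal}
    (hF : ∀ x, Tendsto (fun k => F k x) atTop (𝓝 (f x)))
    (hC : ∀ᶠ k in atTop, ∑' x, F k x ≤ C) : ∑' x, f x ≤ C := by
  rw [ENNReal.tsum_eq_iSup_sum]
  exact iSup_le fun A => le_of_tendsto (tendsto_finsetSum A fun x _ => hF x) <|
    hC.mono fun k hk => (ENNReal.sum_le_tsum A).trans hk

variable {c : NNReal → NNReal → ENNReal}

theorem tsum_iterFiberRearrange_le (hc : Monge c) (hu : Admissible u) (hv : Admissible v)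
    (k : ℕ) :
    ∑' x, c (iterFiberRearrange φ s u k x) (iterFiberRearrange φ s v k x) ≤
      ∑' x, c (u x) (v x) := by
  induction k with
  | zero => rfl
  | succ k ih =>
    exact (tsum_fiberRearrange_le hc (hu.iterFiberRearrange k) (hv.iterFiberRearrange k)).trans ih

theorem tsum_limFiberRearrange_le (hc : Monge c) (hcont : Continuous (Function.uncurry c))
    (hΦ : ∀ i, IsPotential (φ i) Φ) (hu : Admissible u) (hv : Admissible v) :
    ∑' x, c (limFiberRearrange φ s u x) (limFiberRearrange φ s v x) ≤ ∑' x, c (u x) (v x) :=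
  tsum_le_of_tendsto
    (fun x => (hcont.tendsto _).comp
      ((tendsto_iterFiberRearrange hΦ hu x).prodMk_nhds (tendsto_iterFiberRearrange hΦ hv x)))
    (Eventually.of_forall (tsum_iterFiberRearrange_le hc hu hv))

theorem antitone_tsum_iterFiberRearrange (hc : Monge c) (hu : Admissible u)
    (hua : ∀ i, FiberAntitone (φ i) u) (hv : Admissible v) :
    Antitone fun k => ∑' x, c (u x) (iterFiberRearrange φ s v k x) := by
  refine antitone_nat_of_succ_le fun k => ?_
  have h := tsum_fiberRearrange_le (φ := φ (s k)) hc hu (hv.iterFiberRearrange (φ := φ) (s := s) k)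
  rwa [(hua (s k)).fiberRearrange_eq] at h

theorem tsum_limFiberRearrange_le_tsum_iterFiberRearrange (hc : Monge c)
    (hcont : Continuous (Function.uncurry c)) (hΦ : ∀ i, IsPotential (φ i) Φ) (hu : Admissible u)
    (hua : ∀ i, FiberAntitone (φ i) u) (hv : Admissible v) (k : ℕ) :
    ∑' x, c (u x) (limFiberRearrange φ s v x) ≤ ∑' x, c (u x) (iterFiberRearrange φ s v k x) :=
  tsum_le_of_tendsto
    (fun x => (hcont.tendsto _).comp
      (tendsto_const_nhds.prodMk_nhds (tendsto_iterFiberRearrange hΦ hv x)))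
    ((eventually_ge_atTop k).mono fun _ hk => antitone_tsum_iterFiberRearrange hc hu hua hv hk)

theorem limFiberRearrange_eq_self_of_tsum_le (hc : StrictMonge c)
    (hcont : Continuous (Function.uncurry c)) (hΦ : ∀ i, IsPotential (φ i) Φ) (hu : Admissible u)
    (hua : ∀ i, FiberStrictAnti (φ i) u) (hv : Admissible v) (hfin : ∑' x, c (u x) (v x) ≠ ⊤)
    (hle : ∑' x, c (u x) (v x) ≤ ∑' x, c (u x) (limFiberRearrange φ s v x)) :
    limFiberRearrange φ s v = v := by
  have hua' : ∀ i, FiberAntitone (φ i) u := fun i => (hua i).fiberAntitone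
  suffices hiter : ∀ k, iterFiberRearrange φ s v k = v by
    funext x
    exact (tendsto_const_nhds.congr fun k => (congrFun (hiter k) x).symm).limUnder_eq
  intro k
  induction k with
  | zero => rfl
  | succ k ih =>
    have hstep : iterFiberRearrange φ s v (k + 1) = fiberRearrange (φ (s k)) v :=
      congrArg (fiberRearrange (φ (s k))) ih
    refine hstep.trans (FiberAntitone.fiberRearrange_eq fun x y hxy => ?_)
    by_contra! hlt
    have hstrict := tsum_fiberRearrange_lt hc.monge hu hv hfin hxy.1 (hc (hua (s k) hxy) hlt)
    rw [(hua' (s k)).fiberRearrange_eq, ← hstep] at hstrict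
    exact (hle.trans (tsum_limFiberRearrange_le_tsum_iterFiberRearrange hc.monge hcont hΦ hu hua'
      hv (k + 1))).not_gt hstrict

end Iterate

section ConvexCost

theorem add_le_add_of_convexOn {E : Type*} [AddCommGroup E] [Module ℝ E] {A : Set E} {f : E → ℝ}
    (hf : ConvexOn ℝ A f) {x y z w : E} (hx : x ∈ A) (hy : y ∈ A) (hz : z ∈ segment ℝ x y)
    (hw : z + w = x + y) : f z + f w ≤ f x + f y := by
  obtain ⟨l, m, hl, hm, hlm, rfl⟩ := hz
  obtain rfl : l = 1 - m := eq_sub_of_add_eq hlm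
  obtain rfl : w = m • x + (1 - m) • y := by
    rw [eq_sub_of_add_eq' hw]
    module
  have h₁ := hf.2 hx hy hl hm hlm
  have h₂ := hf.2 hx hy hm hl (by ring)
  simp only [smul_eq_mul] at h₁ h₂
  linarith

theorem add_lt_add_of_strictConvexOn {E : Type*} [AddCommGroup E] [Module ℝ E] {A : Set E}
    {f : E → ℝ} (hf : StrictConvexOn ℝ A f) {x y z w : E} (hx : x ∈ A) (hy : y ∈ A) (hxy : x ≠ y)
    (hz : z ∈ openSegment ℝ x y) (hw : z + w = x + y) : f z + f w < f x + f y := by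
  obtain ⟨l, m, hl, hm, hlm, rfl⟩ := hz
  obtain rfl : l = 1 - m := eq_sub_of_add_eq hlm
  obtain rfl : w = m • x + (1 - m) • y := by
    rw [eq_sub_of_add_eq' hw]
    module
  have h₁ := hf.2 hx hy hxy hl hm hlm
  have h₂ := hf.2 hx hy hxy hm hl (by ring)
  simp only [smul_eq_mul] at h₁ h₂
  linarith

/-- The cost `J (a - b)` of a profile `J`, which is meant to be nonnegative. -/
def differenceCost (J : ℝ → ℝ) (a b : NNReal) : ENNReal := ENNReal.ofReal (J (a - b))

variable {J : ℝ → ℝ}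

theorem continuous_differenceCost (hJ : Continuous J) :
    Continuous (Function.uncurry (differenceCost J)) :=
  ENNReal.continuous_ofReal.comp (hJ.comp (by fun_prop))

theorem monge_differenceCost (hJ : ConvexOn ℝ Set.univ J) (hJ0 : ∀ r, 0 ≤ J r) :
    Monge (differenceCost J) := by
  intro a' a ha b' b hb
  have ha' : (a' : ℝ) ≤ a := mod_cast ha
  have hb' : (b' : ℝ) ≤ b := mod_cast hb
  unfold differenceCost
  rw [← ENNReal.ofReal_add (hJ0 _) (hJ0 _), ← ENNReal.ofReal_add (hJ0 _) (hJ0 _)]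
  refine ENNReal.ofReal_le_ofReal ((add_le_add_of_convexOn hJ (x := a' - b) (y := a - b')
    trivial trivial ?_ (by ring)).trans_eq (add_comm _ _))
  rw [segment_eq_Icc (sub_le_sub ha' hb')]
  exact ⟨sub_le_sub_right ha' _, sub_le_sub_left hb' _⟩

theorem strictMonge_differenceCost (hJ : StrictConvexOn ℝ Set.univ J) (hJ0 : ∀ r, 0 ≤ J r) :
    StrictMonge (differenceCost J) := by
  intro a' a ha b' b hb
  have ha' : (a' : ℝ) < a := mod_cast ha
  have hb' : (b' : ℝ) < b := mod_cast hb
  have hlt : (a' - b : ℝ) < a - b' := sub_lt_sub ha' hb'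
  have hmem : (a - b : ℝ) ∈ openSegment ℝ (a' - b : ℝ) (a - b') := by
    rw [openSegment_eq_Ioo hlt]
    exact ⟨sub_lt_sub_right ha' _, sub_lt_sub_left hb' _⟩
  unfold differenceCost
  rw [← ENNReal.ofReal_add (hJ0 _) (hJ0 _), ← ENNReal.ofReal_add (hJ0 _) (hJ0 _)]
  have h := add_lt_add_of_strictConvexOn hJ trivial trivial hlt.ne hmem (w := a' - b') (by ring)
  rw [add_comm (J (a' - b))] at h
  exact (ENNReal.ofReal_lt_ofReal_iff (h.trans_le' (add_nonneg (hJ0 _) (hJ0 _)))).2 h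

theorem convexOn_abs_rpow {p : ℝ} (hp : 1 ≤ p) : ConvexOn ℝ Set.univ fun r : ℝ => |r| ^ p := by
  refine ⟨convex_univ, fun x _ y _ l m hl hm hlm => ?_⟩
  calc |l • x + m • y| ^ p ≤ (l • |x| + m • |y|) ^ p := by
        gcongr
        simpa only [smul_eq_mul, abs_mul, abs_of_nonneg hl, abs_of_nonneg hm] using
          abs_add_le (l • x) (m • y)
    _ ≤ l • |x| ^ p + m • |y| ^ p := (convexOn_rpow hp).2 (abs_nonneg x) (abs_nonneg y) hl hm hlm

theorem strictConvexOn_abs_rpow {p : ℝ} (hp : 1 < p) :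
    StrictConvexOn ℝ Set.univ fun r : ℝ => |r| ^ p := by
  refine ⟨convex_univ, fun x _ y _ hxy l m hl hm hlm => ?_⟩
  have habs : |l • x + m • y| ≤ l • |x| + m • |y| := by
    simpa only [smul_eq_mul, abs_mul, abs_of_pos hl, abs_of_pos hm] using
      abs_add_le (l • x) (m • y)
  rcases eq_or_ne |x| |y| with h | h
  · obtain rfl : x = -y := (abs_eq_abs.1 h).resolve_left hxy
    have hy : y ≠ 0 := by
      rintro rfl
      exact hxy neg_zero
    have hlt : |l • -y + m • y| < |y| := by
      rw [show l • -y + m • y = (m - l) * y by simp only [smul_eq_mul]; ring, abs_mul]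
      exact mul_lt_of_lt_one_left (abs_pos.2 hy) (abs_lt.2 ⟨by linarith, by linarith⟩)
    beta_reduce
    rw [abs_neg, ← add_smul, hlm, one_smul]
    exact Real.rpow_lt_rpow (abs_nonneg _) hlt (by linarith)
  · calc |l • x + m • y| ^ p ≤ (l • |x| + m • |y|) ^ p := by gcongr
      _ < l • |x| ^ p + m • |y| ^ p :=
        (strictConvexOn_rpow hp).2 (abs_nonneg x) (abs_nonneg y) h hl hm hlm

theorem continuous_abs_rpow {p : ℝ} (hp : 0 ≤ p) : Continuous fun r : ℝ => |r| ^ p :=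
  continuous_abs.rpow_const fun _ => Or.inr hp

theorem ofReal_abs_sub_rpow_le {p : ℝ} (hp : 0 ≤ p) (a b : NNReal) :
    ENNReal.ofReal (|(a : ℝ) - b| ^ p) ≤ (a : ENNReal) ^ p + (b : ENNReal) ^ p := by
  have hmax : |(a : ℝ) - b| ≤ (max a b : NNReal) := by
    rw [NNReal.coe_max, abs_sub_le_iff]
    constructor
    · linarith [le_max_left (a : ℝ) b, b.coe_nonneg]
    · linarith [le_max_right (a : ℝ) b, a.coe_nonneg]
  calc ENNReal.ofReal (|(a : ℝ) - b| ^ p) ≤ ENNReal.ofReal ((max a b : NNReal) ^ p) := by gcongr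
    _ = ((max a b : NNReal) : ENNReal) ^ p := by
      rw [← ENNReal.ofReal_rpow_of_nonneg (NNReal.coe_nonneg _) hp, ENNReal.ofReal_coe_nnreal]
    _ ≤ (a : ENNReal) ^ p + (b : ENNReal) ^ p := by
      rcases max_choice a b with h | h <;> rw [h]
      · exact le_self_add
      · exact le_add_self

theorem tsum_ofReal_abs_sub_rpow_lt_top {X : Type*} {p : ℝ} (hp : 0 ≤ p) {u v : X → NNReal}
    (hu : ∑' x, (u x : ENNReal) ^ p < ⊤) (hv : ∑' x, (v x : ENNReal) ^ p < ⊤) :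
    ∑' x, ENNReal.ofReal (|(u x : ℝ) - v x| ^ p) < ⊤ := by
  refine (ENNReal.tsum_le_tsum fun x => ofReal_abs_sub_rpow_le hp (u x) (v x)).trans_lt ?_
  rw [ENNReal.tsum_add]
  exact ENNReal.add_lt_top.2 ⟨hu, hv⟩

end ConvexCost

section Lines

theorem posIdx_pos (m : ℤ) : 0 < posIdx m := by
  unfold posIdx
  split_ifs <;> lia

theorem posIdx_lt_posIdx_add_two_mul_iff (m k : ℤ) :
    posIdx m < posIdx (m + 2 * k) ↔ 0 < k ∧ 0 < m + k ∨ k < 0 ∧ m + k ≤ 0 := by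
  unfold posIdx
  split_ifs <;> lia

theorem posIdx_add_two_mul_eq_iff (m k : ℤ) : posIdx (m + 2 * k) = posIdx m ↔ k = 0 := by
  unfold posIdx
  split_ifs <;> lia

theorem exists_posIdx_add_two_mul_eq (m : ℤ) {n : ℕ} (hn : 0 < n) :
    ∃ k, posIdx (m + 2 * k) = n := by
  rcases Int.emod_two_eq_zero_or_one (n - m) with h | h
  · refine ⟨(n - m) / 2, ?_⟩
    unfold posIdx
    split_ifs <;> lia
  · refine ⟨(1 - n - m) / 2, ?_⟩
    unfold posIdx
    split_ifs <;> lia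

variable {d : ℕ} {e : Fin d → ℝ}

theorem sameLine_refl (x : ZLat d) : sameLine e x x :=
  ⟨0, funext fun i => by simp only [sub_self, zero_smul, Pi.zero_apply]⟩

theorem sameLine.symm {x y : ZLat d} : sameLine e x y → sameLine e y x := by
  rintro ⟨c, hc⟩
  refine ⟨-c, funext fun i => ?_⟩
  rw [neg_smul, ← hc, Pi.neg_apply, neg_sub]

theorem sameLine.trans {x y z : ZLat d} : sameLine e x y → sameLine e y z → sameLine e x z := by
  rintro ⟨a, ha⟩ ⟨b, hb⟩
  refine ⟨a + b, funext fun i => ?_⟩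
  rw [add_smul, ← ha, ← hb, Pi.add_apply, sub_add_sub_cancel]

/-- The equivalence relation whose classes are the lines of direction `e`. -/
def lineSetoid (e : Fin d → ℝ) : Setoid (ZLat d) where
  r := sameLine e
  iseqv := ⟨sameLine_refl, sameLine.symm, sameLine.trans⟩

/-- The line of direction `e` through `x`, with the position of `x` in the spiral order of that
line, counted from `0`. -/
def lineCoord (e : Fin d → ℝ) (x : ZLat d) : Quotient (lineSetoid e) × ℕ :=
  (Quotient.mk _ x, posIdx (pairing e x) - 1)

/-- `b` generates the lattice lines of direction `e`: consecutive points of such a line differ by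
`b`. The scale `q` is `2` for the standard vectors and `1` for the diagonal directions. -/
structure IsGenerator (e : Fin d → ℝ) (b : ZLat d) (q : ℤ) : Prop where
  exists_eq_one : ∃ i, b i = 1
  two_mul_eq (i : Fin d) : 2 * e i = q * b i
  mul_dotProduct_self : q * (b ⬝ᵥ b) = 2

namespace IsGenerator

variable {b : ZLat d} {q : ℤ}

theorem pos (h : IsGenerator e b q) : 0 < q :=
  pos_of_mul_pos_left (h.mul_dotProduct_self ▸ two_pos)
    (Finset.sum_nonneg fun i _ => mul_self_nonneg (b i))

theorem pairing_eq (h : IsGenerator e b q) (x : ZLat d) : pairing e x = q * (b ⬝ᵥ x) := by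
  have hcast : 2 * ∑ i, e i * (x i : ℝ) = (q * (b ⬝ᵥ x) : ℤ) := by
    push_cast [dotProduct]
    simp only [Finset.mul_sum, ← mul_assoc, h.two_mul_eq]
  rw [pairing, hcast, Int.floor_intCast]

theorem pairing_add_smul (h : IsGenerator e b q) (x : ZLat d) (k : ℤ) :
    pairing e (x + k • b) = pairing e x + 2 * k := by
  rw [h.pairing_eq, h.pairing_eq, dotProduct_add, dotProduct_smul, smul_eq_mul]
  linear_combination k * h.mul_dotProduct_self

theorem sameLine_iff (h : IsGenerator e b q) {x y : ZLat d} :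
    sameLine e x y ↔ ∃ k : ℤ, y = x + k • b := by
  have hq : (q : ℝ) ≠ 0 := mod_cast h.pos.ne'
  constructor
  · rintro ⟨c, hc⟩
    have hcoord : ∀ j, 2 * ((x j : ℝ) - y j) = c * q * b j := fun j => by
      rw [congrFun hc j, Pi.smul_apply, smul_eq_mul]
      linear_combination c * h.two_mul_eq j
    obtain ⟨i, hi⟩ := h.exists_eq_one
    refine ⟨y i - x i, funext fun j => ?_⟩
    have hcq : 2 * ((x i : ℝ) - y i) = c * q := by rw [hcoord i, hi, Int.cast_one, mul_one]
    have hj := hcoord j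
    rw [← hcq] at hj
    have hj' : 2 * (x j - y j) = 2 * (x i - y i) * b j := mod_cast hj
    simp only [Pi.add_apply, Pi.smul_apply, smul_eq_mul]
    linarith
  · rintro ⟨k, rfl⟩
    refine ⟨-(2 * k / q), funext fun j => ?_⟩
    simp only [Pi.add_apply, Pi.smul_apply, smul_eq_mul, Int.cast_add, Int.cast_mul]
    field_simp
    linear_combination k * h.two_mul_eq j

theorem lineCoord_bijective (h : IsGenerator e b q) : Function.Bijective (lineCoord e) := by
  constructor
  · intro x y hxy
    obtain ⟨hline, hpos⟩ := Prod.mk.inj hxy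
    obtain ⟨k, rfl⟩ := h.sameLine_iff.1 (Quotient.exact hline)
    rw [tsub_left_inj (posIdx_pos _) (posIdx_pos _), h.pairing_add_smul, eq_comm,
      posIdx_add_two_mul_eq_iff] at hpos
    rw [hpos, zero_smul, add_zero]
  · rintro ⟨⟨x⟩, n⟩
    obtain ⟨k, hk⟩ := exists_posIdx_add_two_mul_eq (pairing e x) n.succ_pos
    have hline : sameLine e (x + k • b) x := (h.sameLine_iff.2 ⟨k, rfl⟩).symm
    refine ⟨x + k • b, Prod.ext (Quotient.sound hline) ?_⟩
    rw [lineCoord, h.pairing_add_smul, hk, Nat.succ_sub_one]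

end IsGenerator

end Lines

section Directions

variable {d : ℕ} {e : Fin d → ℝ}

theorem latE_eq_single (i : Fin d) : latE i = Pi.single i 1 :=
  funext fun j => (Pi.single_apply i 1 j).symm

theorem mem_EvecList_iff : e ∈ EvecList d ↔ e ∈ Evec d := by
  simp only [EvecList, Evec, List.mem_append, List.mem_map, List.mem_flatMap, List.mem_filterMap,
    List.mem_finRange, true_and, Option.ite_none_right_eq_some, Option.some.injEq,
    Set.mem_ofPred_eq, or_assoc, @eq_comm _ e]

/-- The shift `(d, d - 1, …, 1)` of the potential `tiltedNormSq`, which breaks the ties between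
lattice points at equal distance from the origin. -/
def tilt (d : ℕ) : ZLat d := fun i => d - i

theorem isGenerator_stdVec (i : Fin d) : IsGenerator (stdVec d i) (latE i) 2 where
  exists_eq_one := ⟨i, if_pos rfl⟩
  two_mul_eq j := by simp only [stdVec, latE, Int.cast_ite, Int.cast_one, Int.cast_zero,
    Int.cast_ofNat]
  mul_dotProduct_self := by rw [latE_eq_single, single_one_dotProduct, Pi.single_eq_same, mul_one]

theorem isGenerator_add {i j : Fin d} (hij : i ≠ j) :
    IsGenerator (fun k => (stdVec d i k + stdVec d j k) / 2) (latE i + latE j) 1 where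
  exists_eq_one := ⟨i, by simp only [latE, Pi.add_apply, if_pos, if_neg hij, add_zero]⟩
  two_mul_eq k := by
    simp only [stdVec, latE, Pi.add_apply]
    push_cast
    ring
  mul_dotProduct_self := by
    simp [latE_eq_single, hij, hij.symm]

theorem isGenerator_sub {i j : Fin d} (hij : i ≠ j) :
    IsGenerator (fun k => (stdVec d i k - stdVec d j k) / 2) (latE i - latE j) 1 where
  exists_eq_one := ⟨i, by simp only [latE, Pi.sub_apply, if_pos, if_neg hij, sub_zero]⟩
  two_mul_eq k := by
    simp only [stdVec, latE, Pi.sub_apply]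
    push_cast
    ring
  mul_dotProduct_self := by
    simp [latE_eq_single, hij, hij.symm]

theorem exists_isGenerator (he : e ∈ EvecList d) : ∃ b q, IsGenerator e b q ∧
    0 < q * (b ⬝ᵥ tilt d) ∧ q * (b ⬝ᵥ tilt d) < 2 * d + 1 := by
  rcases mem_EvecList_iff.1 he with ⟨i, rfl⟩ | ⟨i, j, hij, rfl⟩ | ⟨i, j, hij, rfl⟩
  · refine ⟨_, _, isGenerator_stdVec i, ?_⟩
    simp only [latE_eq_single, single_one_dotProduct, tilt]
    omega
  · refine ⟨_, _, isGenerator_add hij.ne, ?_⟩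
    simp only [latE_eq_single, add_dotProduct, single_one_dotProduct, tilt]
    omega
  · refine ⟨_, _, isGenerator_sub hij.ne, ?_⟩
    simp only [latE_eq_single, sub_dotProduct, single_one_dotProduct, tilt]
    omega

/-- The decomposition of `ℤ^d` into lines of direction `i`, each of them enumerated by its spiral
order. -/
def lineEquiv (i : {e // e ∈ EvecList d}) : ZLat d ≃ Quotient (lineSetoid i.1) × ℕ :=
  Equiv.ofBijective (lineCoord i.1) <|
    let ⟨_, _, h, _⟩ := exists_isGenerator i.2
    h.lineCoord_bijective

theorem lineEquiv_fst_eq_iff (i : {e // e ∈ EvecList d}) {x y : ZLat d} :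
    (lineEquiv i x).1 = (lineEquiv i y).1 ↔ sameLine i.1 x y :=
  Quotient.eq (r := lineSetoid i.1)

theorem fiberLT_lineEquiv_iff (i : {e // e ∈ EvecList d}) {x y : ZLat d} :
    FiberLT (lineEquiv i) x y ↔
      sameLine i.1 x y ∧ posIdx (pairing i.1 x) < posIdx (pairing i.1 y) := by
  have hx := posIdx_pos (pairing i.1 x)
  exact and_congr (lineEquiv_fst_eq_iff i)
    (show posIdx (pairing i.1 x) - 1 < posIdx (pairing i.1 y) - 1 ↔ _ by lia)

theorem IsGenerator.fiberLT_lineEquiv_iff {i : {e // e ∈ EvecList d}} {b : ZLat d} {q : ℤ}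
    (h : IsGenerator i.1 b q) {x y : ZLat d} :
    FiberLT (lineEquiv i) x y ↔
      ∃ k, y = x + k • b ∧ (0 < k ∧ 0 < pairing i.1 x + k ∨ k < 0 ∧ pairing i.1 x + k ≤ 0) := by
  rw [_root_.fiberLT_lineEquiv_iff, h.sameLine_iff]
  constructor
  · rintro ⟨⟨k, rfl⟩, hlt⟩
    rw [h.pairing_add_smul, posIdx_lt_posIdx_add_two_mul_iff] at hlt
    exact ⟨k, rfl, hlt⟩
  · rintro ⟨k, rfl, hlt⟩
    rw [h.pairing_add_smul, posIdx_lt_posIdx_add_two_mul_iff]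
    exact ⟨⟨k, rfl⟩, hlt⟩

theorem stepR_eq_fiberRearrange (i : {e // e ∈ EvecList d}) (u : ZLat d → NNReal) :
    stepR i.1 u = fiberRearrange (lineEquiv i) u := by
  funext x
  rw [fiberRearrange_apply_eq fun y =>
    ⟨fun h => (lineEquiv_fst_eq_iff i).2 h.symm, fun h => ((lineEquiv_fst_eq_iff i).1 h).symm⟩]
  exact congrArg (nthLargest _) (Nat.sub_add_cancel (posIdx_pos _)).symm

theorem directionSeq_mem [NeZero d] (k : ℕ) :
    (EvecList d).getD (k % (EvecList d).length) 0 ∈ EvecList d := by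
  have hlen : 0 < (EvecList d).length :=
    List.length_pos_of_mem (mem_EvecList_iff.2 (Or.inl ⟨0, rfl⟩))
  rw [List.getD_eq_getElem _ _ (Nat.mod_lt k hlen)]
  exact List.getElem_mem _

/-- The direction of the `k`-th rearrangement step. -/
def directionSeq (d : ℕ) [NeZero d] (k : ℕ) : {e // e ∈ EvecList d} :=
  ⟨(EvecList d).getD (k % (EvecList d).length) 0, directionSeq_mem k⟩

theorem frequently_directionSeq_eq [NeZero d] (i : {e // e ∈ EvecList d}) :
    ∃ᶠ k in atTop, directionSeq d k = i := by
  obtain ⟨n, hn, hi⟩ := List.mem_iff_getElem.1 i.2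
  refine (Nat.frequently_mod_eq hn).mono fun k hk => Subtype.ext ?_
  simp only [directionSeq, hk, List.getD_eq_getElem _ _ hn, hi]

theorem iterR_eq_iterFiberRearrange [NeZero d] (u : ZLat d → NNReal) (k : ℕ) :
    iterR d u k = iterFiberRearrange lineEquiv (directionSeq d) u k := by
  induction k with
  | zero => rfl
  | succ k ih =>
    rw [iterR, ih]
    exact stepR_eq_fiberRearrange (directionSeq d k) _

theorem RZd_eq_limFiberRearrange [NeZero d] (u : ZLat d → NNReal) :
    RZd d u = limFiberRearrange lineEquiv (directionSeq d) u := by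
  funext x
  simp only [RZd, iterR_eq_iterFiberRearrange, limFiberRearrange]

end Directions

section TiltedNorm

variable {d : ℕ} {e : Fin d → ℝ}

/-- `N²` times the squared distance from `x` to the point `η / N`. For `N = 2d + 1` and `η = tilt d`
it increases along the spiral order of every line whose direction lies in `EvecList d`. -/
def tiltedNormSq (N : ℕ) (η x : ZLat d) : ℕ :=
  (((N : ℤ) • x - η) ⬝ᵥ ((N : ℤ) • x - η)).toNat

theorem dotProduct_self_nonneg (y : ZLat d) : 0 ≤ y ⬝ᵥ y :=
  Finset.sum_nonneg fun i _ => mul_self_nonneg (y i)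

theorem natCast_tiltedNormSq (N : ℕ) (η x : ZLat d) :
    (tiltedNormSq N η x : ℤ) = ((N : ℤ) • x - η) ⬝ᵥ ((N : ℤ) • x - η) :=
  Int.toNat_of_nonneg (dotProduct_self_nonneg _)

theorem abs_le_dotProduct_self (y : ZLat d) (i : Fin d) : |y i| ≤ y ⬝ᵥ y :=
  calc |y i| ≤ y i * y i := by
        rw [← abs_mul_abs_self]
        nlinarith [abs_nonneg (y i)]
    _ ≤ y ⬝ᵥ y :=
        Finset.single_le_sum (fun i _ => mul_self_nonneg (y i)) (Finset.mem_univ i)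

theorem tendsto_tiltedNormSq {N : ℕ} (hN : N ≠ 0) (η : ZLat d) :
    Tendsto (tiltedNormSq N η) cofinite atTop := by
  refine tendsto_atTop.2 fun n => ?_
  have hinj : Function.Injective fun x : ZLat d => (N : ℤ) • x - η := fun x y h =>
    smul_right_injective (ZLat d) (Nat.cast_ne_zero.2 hN) (sub_left_injective h)
  refine ((Set.finite_Icc (fun _ => -n : ZLat d) fun _ => n).preimage hinj.injOn).subset
    fun x hx => ?_
  have hlt : (tiltedNormSq N η x : ℤ) < n := mod_cast not_le.1 hx
  rw [natCast_tiltedNormSq] at hlt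
  have habs := fun i => abs_le.1 ((abs_le_dotProduct_self ((N : ℤ) • x - η) i).trans hlt.le)
  exact ⟨fun i => (habs i).1, fun i => (habs i).2⟩

theorem IsGenerator.mul_tiltedNormSq_add_smul {b : ZLat d} {q : ℤ} (h : IsGenerator e b q)
    (N : ℕ) (η x : ZLat d) (k : ℤ) :
    q * tiltedNormSq N η (x + k • b) = q * tiltedNormSq N η x +
      2 * N * (k * (N * (pairing e x + k) - q * (b ⬝ᵥ η))) := by
  have hb : (N : ℤ) • (x + k • b) - η = (N : ℤ) • x - η + (N * k : ℤ) • b := by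
    ext i
    simp only [Pi.add_apply, Pi.sub_apply, Pi.smul_apply, smul_eq_mul]
    ring
  rw [natCast_tiltedNormSq, natCast_tiltedNormSq, hb, h.pairing_eq]
  generalize hy : (N : ℤ) • x - η = y
  have hby : b ⬝ᵥ y = N * (b ⬝ᵥ x) - b ⬝ᵥ η := by
    rw [← hy, dotProduct_sub, dotProduct_smul, smul_eq_mul]
  simp only [add_dotProduct, dotProduct_add, smul_dotProduct, dotProduct_smul, smul_eq_mul,
    dotProduct_comm y b, hby]
  linear_combination (N * k) ^ 2 * h.mul_dotProduct_self

theorem isPotential_tiltedNormSq (i : {e // e ∈ EvecList d}) :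
    IsPotential (lineEquiv i) (tiltedNormSq (2 * d + 1) (tilt d)) where
  tendsto := tendsto_tiltedNormSq (Nat.succ_ne_zero _) _
  lt x y hxy := by
    obtain ⟨b, q, h, hpos, hlt⟩ := exists_isGenerator i.2
    obtain ⟨k, rfl, hk⟩ := h.fiberLT_lineEquiv_iff.1 hxy
    have hmul := h.mul_tiltedNormSq_add_smul (2 * d + 1) (tilt d) x k
    push_cast at hmul
    set N : ℤ := 2 * d + 1
    set m := pairing i.1 x
    have hincr : 0 < k * (N * (m + k) - q * (b ⬝ᵥ tilt d)) := by
      rcases hk with ⟨hk, hm⟩ | ⟨hk, hm⟩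
      · exact mul_pos hk (by nlinarith)
      · exact mul_pos_of_neg_of_neg hk (by nlinarith)
    refine Nat.cast_lt (α := ℤ).1 (lt_of_mul_lt_mul_left ?_ h.pos.le)
    rw [hmul]
    have hN : 0 < N := by lia
    exact lt_add_of_pos_right _ (mul_pos (mul_pos two_pos hN) hincr)

end TiltedNorm

section SpiralLowerSet

variable {d : ℕ}

/-- `A` is closed under moving, on any line of a direction in `EvecList d`, to an earlier point of
the spiral order of that line. -/
def IsSpiralLowerSet (A : Set (ZLat d)) : Prop :=
  ∀ ⦃i x y⦄, FiberLT (lineEquiv i) x y → y ∈ A → x ∈ A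

namespace IsSpiralLowerSet

variable {A : Set (ZLat d)} {x : ZLat d}

theorem update_mem_of_abs_lt (hA : IsSpiralLowerSet A) (hx : x ∈ A) {i : Fin d} {a : ℤ}
    (ha : |a| < |x i|) : Function.update x i a ∈ A := by
  have h := isGenerator_stdVec i
  let e : {e // e ∈ EvecList d} := ⟨_, mem_EvecList_iff.2 (Or.inl ⟨i, rfl⟩)⟩
  have hlt : FiberLT (lineEquiv e) (Function.update x i a) x := by
    refine h.fiberLT_lineEquiv_iff.2 ⟨x i - a, ?_, ?_⟩
    · ext j
      rcases eq_or_ne j i with rfl | hj <;> simp [latE_eq_single, *]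
    · rw [h.pairing_eq, latE_eq_single, single_one_dotProduct, Function.update_self]
      rw [abs_lt] at ha
      rcases abs_cases (x i) with ⟨_, _⟩ | ⟨_, _⟩ <;> lia
  exact hA hlt hx

theorem update_sub_update_neg_mem (hA : IsSpiralLowerSet A) (hx : x ∈ A) {i j : Fin d}
    (hij : i ≠ j) (hxj : x j = 0) {k : ℤ} (hk : 0 < k) (hki : k < x i) :
    Function.update (Function.update x i (x i - k)) j (-k) ∈ A := by
  have h := isGenerator_add hij
  have hmem : (fun k => (stdVec d i k + stdVec d j k) / 2) ∈ EvecList d := by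
    rcases hij.lt_or_gt with hij | hij
    · exact mem_EvecList_iff.2 (Or.inr (Or.inl ⟨i, j, hij, rfl⟩))
    · simp only [add_comm (stdVec d i _)]
      exact mem_EvecList_iff.2 (Or.inr (Or.inl ⟨j, i, hij, rfl⟩))
  set y := Function.update (Function.update x i (x i - k)) j (-k) with hy
  have hyi : y i = x i - k := by rw [hy, Function.update_of_ne hij, Function.update_self]
  have hyj : y j = -k := Function.update_self ..
  have hlt : FiberLT (lineEquiv ⟨_, hmem⟩) y x := by
    refine h.fiberLT_lineEquiv_iff.2 ⟨k, ?_, ?_⟩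
    · ext l
      rcases eq_or_ne l j with rfl | hlj
      · simp [latE_eq_single, hij, hyj, hxj]
      rcases eq_or_ne l i with rfl | hli
      · simp [latE_eq_single, hij, hyi]
      · simp [latE_eq_single, hy, hlj, hli]
    · simp only [h.pairing_eq, latE_eq_single, add_dotProduct, single_one_dotProduct, hyi, hyj]
      lia
  exact hA hlt hx

theorem update_sub_update_mem (hA : IsSpiralLowerSet A) (hx : x ∈ A) {i j : Fin d} (hij : i ≠ j)
    {k a : ℤ} (ha : |a| < k) (hki : k < x i) :
    Function.update (Function.update x j a) i (x i - k) ∈ A := by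
  have hk : 0 < k := (abs_nonneg a).trans_lt ha
  have hx₀ : Function.update x j 0 ∈ A := by
    rcases eq_or_ne (x j) 0 with h | h
    · rwa [← h, Function.update_eq_self]
    · exact hA.update_mem_of_abs_lt hx (by rwa [abs_zero, abs_pos])
  have hneg := hA.update_sub_update_neg_mem hx₀ hij (Function.update_self ..) hk
    (by rwa [Function.update_of_ne hij])
  have ha' := hA.update_mem_of_abs_lt hneg (i := j) (a := a)
    (by rwa [Function.update_self, abs_neg, abs_of_pos hk])
  rwa [Function.update_idem, Function.update_of_ne hij, Function.update_comm hij.symm,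
    Function.update_idem, Function.update_comm hij] at ha'

theorem exists_mem_forall_eq (hA : IsSpiralLowerSet A) {i : Fin d} (z : ZLat d)
    {S : Finset (Fin d)} (hS : i ∉ S) (hx : x ∈ A) {B : ℤ} (hB : 0 < B)
    (hBx : B + ∑ j ∈ S, (|z j| + 1) ≤ x i) : ∃ y ∈ A, B ≤ y i ∧ ∀ j ∈ S, y j = z j := by
  induction S using Finset.induction_on generalizing B with
  | empty => exact ⟨x, hx, by rwa [Finset.sum_empty, add_zero] at hBx, by simp⟩
  | insert j S hj ih =>
    obtain ⟨hij, hiS⟩ : i ≠ j ∧ i ∉ S := by rwa [Finset.mem_insert, not_or] at hS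
    rw [Finset.sum_insert hj, ← add_assoc] at hBx
    obtain ⟨y, hy, hyi, hyS⟩ := ih hiS (by positivity) hBx
    refine ⟨_, hA.update_sub_update_mem hy hij (lt_add_one |z j|) (by linarith), ?_, ?_⟩
    · rw [Function.update_self]
      linarith
    · intro l hl
      rcases Finset.mem_insert.1 hl with rfl | hl
      · rw [Function.update_of_ne hij.symm, Function.update_self]
      · rw [Function.update_of_ne (ne_of_mem_of_not_mem hl hiS),
          Function.update_of_ne (ne_of_mem_of_not_mem hl hj), hyS l hl]

theorem eq_univ_of_infinite (hA : IsSpiralLowerSet A) (hinf : A.Infinite) : A = Set.univ := by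
  refine Set.eq_univ_of_forall fun z => ?_
  set M : ℤ := ∑ j, (|z j| + 1)
  obtain ⟨x, hx, hxM⟩ := hinf.exists_notMem_finite
    (Set.finite_Icc (fun _ => -M : ZLat d) fun _ => M)
  obtain ⟨i, hi⟩ : ∃ i, M < |x i| := by
    by_contra! h
    exact hxM ⟨fun i => (abs_le.1 (h i)).1, fun i => (abs_le.1 (h i)).2⟩
  have hM : |z i| + 1 + ∑ j ∈ Finset.univ.erase i, (|z j| + 1) = M :=
    Finset.add_sum_erase _ (fun j => |z j| + 1) (Finset.mem_univ i)
  have hM0 : 0 ≤ M := by positivity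
  have hx' := hA.update_mem_of_abs_lt hx (i := i) (a := |x i| - 1)
    (by rw [abs_of_nonneg (by lia)]; lia)
  obtain ⟨y, hy, hyi, hyz⟩ := hA.exists_mem_forall_eq z (Finset.notMem_erase i _) hx'
    (B := |z i| + 1) (by positivity) (by rw [hM, Function.update_self]; lia)
  have hz := hA.update_mem_of_abs_lt hy (i := i) (a := z i) (by linarith [le_abs_self (y i)])
  rwa [Function.update_eq_iff.2
    ⟨rfl, fun j hj => hyz j (Finset.mem_erase.2 ⟨hj, Finset.mem_univ j⟩)⟩] at hz

end IsSpiralLowerSet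

end SpiralLowerSet

section Contraction

variable {d : ℕ} {u : ZLat d → NNReal}

theorem isSpiralLowerSet_setOf_pos (hua : ∀ i, FiberAntitone (lineEquiv i) u) :
    IsSpiralLowerSet {x | 0 < u x} := fun i _ _ hxy hy => hy.trans_le (hua i hxy)

theorem StrictRan.fiberStrictAnti_lineEquiv (hran : StrictRan u) (hu : Admissible u)
    (hua : ∀ i, FiberAntitone (lineEquiv i) u) (i : {e // e ∈ EvecList d}) :
    FiberStrictAnti (lineEquiv i) u := fun x y hxy => by
  have hpos := (isSpiralLowerSet_setOf_pos hua).eq_univ_of_infinite (hran.infinite_support hu)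
  have hy : 0 < u y := Set.eq_univ_iff_forall.1 hpos y
  refine lt_of_le_of_ne (hua i hxy) fun heq => hxy.2.ne' ?_
  rw [hran.eq_of_apply_eq hu hy heq]

theorem fiberAntitone_RZd [NeZero d] (hu : Admissible u) (i : {e // e ∈ EvecList d}) :
    FiberAntitone (lineEquiv i) (RZd d u) := by
  rw [RZd_eq_limFiberRearrange]
  exact fiberAntitone_limFiberRearrange isPotential_tiltedNormSq hu (frequently_directionSeq_eq i)

theorem stmt15_general (d : ℕ) [NeZero d] {c : NNReal → NNReal → ENNReal} (hc : Monge c)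
    (hcont : Continuous (Function.uncurry c)) {u v : ZLat d → NNReal} (hu : Admissible u)
    (hv : Admissible v) :
    ∑' x, c (RZd d u x) (RZd d v x) ≤ ∑' x, c (u x) (v x) ∧
    (StrictMonge c → RZd d u = u → StrictRan u → ∑' x, c (u x) (v x) < ⊤ →
      (∑' x, c (RZd d u x) (RZd d v x) = ∑' x, c (u x) (v x) ↔ v = RZd d v)) := by
  constructor
  · simp only [RZd_eq_limFiberRearrange]
    exact tsum_limFiberRearrange_le hc hcont isPotential_tiltedNormSq hu hv
  intro hstrict hsymm hran hfin
  refine ⟨fun heq => ?_, fun hv' => by rw [hsymm, ← hv']⟩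
  have hua : ∀ i, FiberAntitone (lineEquiv i) u := fun i => hsymm ▸ fiberAntitone_RZd hu i
  rw [hsymm, RZd_eq_limFiberRearrange v] at heq
  rw [RZd_eq_limFiberRearrange v]
  exact (limFiberRearrange_eq_self_of_tsum_le hstrict hcont isPotential_tiltedNormSq hu
    (hran.fiberStrictAnti_lineEquiv hu hua) hv hfin.ne heq.ge).symm

end Contraction

/-- The Schwarz rearrangement is a contraction in ℓ^p, with the characterization of
the equality case for p > 1. -/
theorem stmt15 (d : ℕ) (hd : 2 ≤ d) (p : ℝ) (hp : 1 ≤ p) (u v : ZLat d → NNReal)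
    (hu : (∑' x : ZLat d, (u x : ENNReal) ^ p) < ⊤)
    (hv : (∑' x : ZLat d, (v x : ENNReal) ^ p) < ⊤) :
    (∑' x : ZLat d, ENNReal.ofReal (|(RZd d u x : ℝ) - (RZd d v x : ℝ)| ^ p) ≤
      ∑' x : ZLat d, ENNReal.ofReal (|(u x : ℝ) - (v x : ℝ)| ^ p)) ∧
    (1 < p → RZd d u = u → StrictRan u →
      ((∑' x : ZLat d, ENNReal.ofReal (|(RZd d u x : ℝ) - (RZd d v x : ℝ)| ^ p)) =
        (∑' x : ZLat d, ENNReal.ofReal (|(u x : ℝ) - (v x : ℝ)| ^ p)) ↔ v = RZd d v)) := by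
  have : NeZero d := ⟨by lia⟩
  have hmain := stmt15_general d
    (monge_differenceCost (convexOn_abs_rpow hp) fun r => by positivity)
    (continuous_differenceCost (continuous_abs_rpow (by linarith)))
    (admissible_of_tsum_rpow_lt_top (by linarith) hu)
    (admissible_of_tsum_rpow_lt_top (by linarith) hv)
  exact ⟨hmain.1, fun hp1 hsymm hran =>
    hmain.2 (strictMonge_differenceCost (strictConvexOn_abs_rpow hp1) fun r => by positivity)
      hsymm hran (tsum_ofReal_abs_sub_rpow_lt_top (by linarith) hu hv)⟩

end
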